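/- Let F : ℝ^m → ℝ be L-smooth and bounded below, set L' = L + 1, and let (z_k) be generated by z_{k+1} = z_k + t_k s_k with ‖g_k − ∇F(z_k)‖₂ ≤ δ_k, c₁‖g_k‖₂² ≤ −g_kᵀ s_k, ‖s_k‖₂ ≤ c₂‖g_k‖₂, and δ_k ≤ β‖g_k‖₂ for some β ∈ [0, c₁/(c₂√L')). Suppose t_k ∈ [t̄₁ + γ, t̄₂ − γ] for all k, where t̄₁ = (c₁ − √Δ)/(c₂² L'), t̄₂ = (c₁ + √Δ)/(c₂² L'), Δ = c₁² − L' c₂² β², and γ ∈ (0, (t̄₂ − t̄₁)/2]. Then the series Σ_{k=0}^{∞} ‖g_k‖₂² converges. -/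

import Mathlib

open scoped RealInnerProductSpace

lemma descent_aux {E : Type*} [NormedAddCommGroup E] [InnerProductSpace ℝ E] [CompleteSpace E]
    (F : E → ℝ) (L : ℝ) (hdiff : Differentiable ℝ F)
    (hlip : ∀ x y : E, ‖gradient F x - gradient F y‖ ≤ L * ‖x - y‖) (x v : E) :
    F (x + v) ≤ F x + ⟪gradient F x, v⟫ + L / 2 * ‖v‖ ^ 2 := by
  have h1 : ∀ τ : ℝ, HasDerivAt (fun τ : ℝ => F (x + τ • v)) ⟪gradient F (x + τ • v), v⟫ τ := by
    intro τ
    have hg := (hdiff (x + τ • v)).hasGradientAt.hasFDerivAt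
    have hl : HasDerivAt (fun τ : ℝ => x + τ • v) v τ := by
      simpa using ((hasDerivAt_id τ).smul_const v).const_add x
    have := hg.comp_hasDerivAt τ hl
    exact this
  have h2 : ∀ τ : ℝ, HasDerivAt
      (fun τ : ℝ => F x + τ * ⟪gradient F x, v⟫ + L / 2 * ‖v‖ ^ 2 * τ ^ 2)
      (⟪gradient F x, v⟫ + L * ‖v‖ ^ 2 * τ) τ := by
    intro τ
    have a := ((hasDerivAt_id τ).mul_const ⟪gradient F x, v⟫).const_add (F x)
    have b := ((hasDerivAt_id τ).pow 2).const_mul (L / 2 * ‖v‖ ^ 2)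
    have e : ⟪gradient F x, v⟫ + L * ‖v‖ ^ 2 * τ = 1 * ⟪gradient F x, v⟫ +
        L / 2 * ‖v‖ ^ 2 * (((2 : ℕ) : ℝ) * id τ ^ (2 - 1) * 1) := by
      simp; ring
    rw [e]
    exact a.add b
  have := image_le_of_deriv_right_le_deriv_boundary (a := 0) (b := 1)
    (fun τ _ => (h1 τ).continuousAt.continuousWithinAt)
    (fun τ _ => (h1 τ).hasDerivWithinAt) (by simp)
    (fun τ _ => (h2 τ).continuousAt.continuousWithinAt)
    (fun τ _ => (h2 τ).hasDerivWithinAt) (by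
      intro τ hτ
      have e : ⟪gradient F (x + τ • v), v⟫ = ⟪gradient F x, v⟫ +
        ⟪gradient F (x + τ • v) - gradient F x, v⟫ := by rw [inner_sub_left]; ring
      rw [e]
      have c := real_inner_le_norm (gradient F (x + τ • v) - gradient F x) v
      have d := hlip (x + τ • v) x
      rw [add_sub_cancel_left, norm_smul, Real.norm_eq_abs, abs_of_nonneg hτ.1] at d
      have := mul_le_mul_of_nonneg_right d (norm_nonneg v)
      nlinarith) (Set.right_mem_Icc.2 zero_le_one)
  simpa using this

/-- summability of the squared inexact gradient norms under bounded step sizes. -/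
theorem stmt_6 (m : ℕ) (F : EuclideanSpace ℝ (Fin m) → ℝ) (L L' : ℝ)
    (hdiff : Differentiable ℝ F)
    (hlip : ∀ x y : EuclideanSpace ℝ (Fin m), ‖gradient F x - gradient F y‖ ≤ L * ‖x - y‖)
    (hbdd : ∃ B : ℝ, ∀ x, B ≤ F x)
    (hL' : L' = L + 1)
    (z s g : ℕ → EuclideanSpace ℝ (Fin m)) (t δ : ℕ → ℝ)
    (c₁ c₂ : ℝ) (hc₁ : 0 < c₁) (hc₂ : 0 < c₂)
    (hδ : ∀ k, 0 ≤ δ k)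
    (hupd : ∀ k, z (k + 1) = z k + t k • s k)
    (herr : ∀ k, ‖g k - gradient F (z k)‖ ≤ δ k)
    (hdesc : ∀ k, c₁ * ‖g k‖ ^ 2 ≤ -⟪g k, s k⟫)
    (hbnd : ∀ k, ‖s k‖ ≤ c₂ * ‖g k‖)
    (β : ℝ) (hβ0 : 0 ≤ β) (hβ1 : β < c₁ / (c₂ * Real.sqrt L'))
    (hδβ : ∀ k, δ k ≤ β * ‖g k‖)
    (Δ t₁ t₂ : ℝ)
    (hΔ : Δ = c₁ ^ 2 - L' * c₂ ^ 2 * β ^ 2)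
    (ht₁ : t₁ = (c₁ - Real.sqrt Δ) / (c₂ ^ 2 * L'))
    (ht₂ : t₂ = (c₁ + Real.sqrt Δ) / (c₂ ^ 2 * L'))
    (γ : ℝ) (hγ0 : 0 < γ) (hγ1 : γ ≤ (t₂ - t₁) / 2)
    (htk : ∀ k, t k ∈ Set.Icc (t₁ + γ) (t₂ - γ)) :
    Summable (fun k => ‖g k‖ ^ 2) := by
  rcases Nat.eq_zero_or_pos m with rfl | hm
  · have : ∀ k, g k = 0 := fun k => Subsingleton.elim _ _
    simp [this]
  have hL : 0 ≤ L := by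
    have h := hlip (EuclideanSpace.single ⟨0, hm⟩ 1) 0
    simp only [sub_zero, EuclideanSpace.norm_single, norm_one, mul_one] at h
    exact (norm_nonneg _).trans h
  have hL'0 : 0 < L' := by linarith
  have hA : 0 < c₂ ^ 2 * L' := by positivity
  have hΔ0 : 0 ≤ Δ := by
    have hs := Real.sqrt_pos.2 hL'0
    rw [lt_div_iff₀ (by positivity)] at hβ1
    have h := pow_le_pow_left₀ (by positivity) hβ1.le 2
    have : (β * (c₂ * √L')) ^ 2 = L' * c₂ ^ 2 * β ^ 2 := by
      rw [mul_pow, mul_pow, Real.sq_sqrt hL'0.le]; ring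
    linarith
  have hsq := Real.sq_sqrt hΔ0
  have hsle : √Δ ≤ c₁ := by
    apply Real.sqrt_le_iff.2 ⟨hc₁.le, ?_⟩
    have : 0 ≤ L' * c₂ ^ 2 * β ^ 2 := by positivity
    linarith
  have ht₁0 : 0 ≤ t₁ := by rw [ht₁]; exact div_nonneg (by linarith) hA.le
  have e1 : c₂ ^ 2 * L' * (t₁ + t₂) = 2 * c₁ := by rw [ht₁, ht₂]; field_simp; ring
  have e2 : c₂ ^ 2 * L' * (t₁ * t₂) = β ^ 2 := by
    have : (c₁ - √Δ) * (c₁ + √Δ) = c₂ ^ 2 * L' * β ^ 2 := by linarith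
    rw [ht₁, ht₂, div_mul_div_comm, this]; field_simp
  set C := c₂ ^ 2 * L' * γ ^ 2 / 2 with hC
  have hC0 : 0 < C := by positivity
  have step : ∀ k, C * ‖g k‖ ^ 2 ≤ F (z k) - F (z (k + 1)) := by
    intro k
    obtain ⟨hk1, hk2⟩ := htk k
    have htp : 0 ≤ t k := by linarith
    have d := descent_aux F L hdiff hlip (z k) (t k • s k)
    rw [← hupd, inner_smul_right, norm_smul, Real.norm_eq_abs, abs_of_nonneg htp] at d
    have e : ⟪gradient F (z k), s k⟫ = ⟪g k, s k⟫ - ⟪g k - gradient F (z k), s k⟫ := by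
      rw [inner_sub_left]; ring
    have a1 : -⟪g k - gradient F (z k), s k⟫ ≤ (β * ‖g k‖) * ‖s k‖ := by
      have := (abs_le.1 (abs_real_inner_le_norm (g k - gradient F (z k)) (s k))).1
      have := mul_le_mul_of_nonneg_right ((herr k).trans (hδβ k)) (norm_nonneg (s k))
      linarith
    have a2 : ⟪gradient F (z k), s k⟫ ≤ -(c₁ * ‖g k‖ ^ 2) + (β * ‖g k‖) * ‖s k‖ := by
      have := hdesc k
      linarith
    have a3 := mul_le_mul_of_nonneg_left a2 htp
    have a4 := sq_nonneg (β * ‖g k‖ - t k * ‖s k‖)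
    have a5 : (t k * ‖s k‖) ^ 2 ≤ (t k * (c₂ * ‖g k‖)) ^ 2 := by
      have := hbnd k
      gcongr
    have a6 := mul_le_mul_of_nonneg_left a5 hL'0.le
    have a7 : γ ^ 2 ≤ (t k - t₁) * (t₂ - t k) := by
      rw [sq]; exact mul_le_mul (by linarith) (by linarith) hγ0.le (by linarith)
    have a8 := mul_le_mul_of_nonneg_left a7 hA.le
    have a9 : c₂ ^ 2 * L' * γ ^ 2 ≤ 2 * c₁ * t k - c₂ ^ 2 * L' * t k ^ 2 - β ^ 2 := by
      rw [← e1, ← e2]; linarith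
    have a10 := mul_le_mul_of_nonneg_right a9 (sq_nonneg ‖g k‖)
    have a11 : L * (t k * ‖s k‖) ^ 2 = L' * (t k * ‖s k‖) ^ 2 - (t k * ‖s k‖) ^ 2 := by
      rw [hL']; ring
    rw [hC]
    linarith
  obtain ⟨B, hB⟩ := hbdd
  refine summable_of_sum_range_le (c := (F (z 0) - B) / C) (fun k => sq_nonneg _) fun n => ?_
  rw [le_div_iff₀ hC0, mul_comm, Finset.mul_sum]
  refine (Finset.sum_le_sum fun k _ => step k).trans ?_
  rw [Finset.sum_range_sub' (fun k => F (z k))]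
  linarith [hB (z n)]
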